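/- For each named GS4 derivation P with conclusion ⊢Γ,A, where A is any non-atomic named formula, the branch-labeled axiom graph of the isolation of A in P equals the branch-labeled axiom graph of P: ⟨⟨isl(P,A)⟩⟩ = ⟨⟨P⟩⟩. -/

import Mathlib

open scoped Classical

noncomputable section

namespace GS4

/-- Named classical propositional formulas over atoms `α`, with names in `ℕ`. -/
inductive NForm (α : Type) : Type
  | atom : ℕ → α → NForm α
  | or   : NForm α → NForm α → NForm α
  | and  : NForm α → NForm α → NForm α

variable {α : Type}

/-- Name-preserving De Morgan negation, w.r.t. an involution `bar` on atoms. -/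
def negF (bar : α → α) : NForm α → NForm α
  | .atom x a => .atom x (bar a)
  | .or A B => .and (negF bar A) (negF bar B)
  | .and A B => .or (negF bar A) (negF bar B)

/-- The set of names occurring in a named formula. -/
def NForm.names : NForm α → Set ℕ
  | .atom x _ => {x}
  | .or A B => A.names ∪ B.names
  | .and A B => A.names ∪ B.names

/-- A named formula is sharing-free if every name occurs at most once in it. -/
def NForm.sharingFree : NForm α → Prop
  | .atom _ _ => True
  | .or A B => A.sharingFree ∧ B.sharingFree ∧ Disjoint A.names B.names
  | .and A B => A.sharingFree ∧ B.sharingFree ∧ Disjoint A.names B.names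

def NForm.isAtom : NForm α → Prop
  | .atom _ _ => True
  | _ => False

/-- Anonymous formulas (shapes): `A ≡ B` iff their shapes coincide. -/
inductive Shape (α : Type) : Type
  | atom : α → Shape α
  | or   : Shape α → Shape α → Shape α
  | and  : Shape α → Shape α → Shape α

def NForm.shape : NForm α → Shape α
  | .atom _ a => .atom a
  | .or A B => .or A.shape B.shape
  | .and A B => .and A.shape B.shape

/-- `HasAtom A x a`: the atomic formula `x:a` occurs in `A`. -/
def HasAtom : NForm α → ℕ → α → Prop
  | .atom y b, x, a => y = x ∧ b = a
  | .or A B, x, a => HasAtom A x a ∨ HasAtom B x a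
  | .and A B, x, a => HasAtom A x a ∨ HasAtom B x a

/-- Names of a finite set of named formulas. -/
def snames (Γ : Finset (NForm α)) : Set ℕ := ⋃ A ∈ Γ, A.names

/-- A finite set of named formulas is sharing-free if all its elements are
sharing-free with pairwise disjoint name sets. -/
def SFSet (Γ : Finset (NForm α)) : Prop :=
  (∀ A ∈ Γ, A.sharingFree) ∧
  ∀ A ∈ Γ, ∀ B ∈ Γ, A ≠ B → Disjoint A.names B.names

/-- `x:a` occurs in some formula of `Γ` (i.e. `Γ[x] = a` for sharing-free `Γ`). -/
def HasAtomS (Γ : Finset (NForm α)) (x : ℕ) (a : α) : Prop :=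
  ∃ A ∈ Γ, HasAtom A x a

/-- Branch sets of named formulas. -/
def BrF : NForm α → Set (Set ℕ)
  | .atom x _ => {{x}}
  | .or A B => {X | ∃ Y ∈ BrF A, ∃ Z ∈ BrF B, X = Y ∪ Z}
  | .and A B => BrF A ∪ BrF B

/-- Branch sets of sequents (finite sharing-free sets of named formulas). -/
def BrS (Γ : Finset (NForm α)) : Set (Set ℕ) :=
  {X | X ⊆ snames Γ ∧ ∀ A ∈ Γ, X ∩ A.names ∈ BrF A}

/-! ## Branch-labeled name graphs -/

/-- A branch-labeled name graph: vertices and a relation between unordered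
pairs of vertices and branch labels. -/
structure BLGraph : Type where
  verts : Set ℕ
  rel : Sym2 ℕ → Set ℕ → Prop

/-- Well-formedness of a bl-graph: related pairs consist of distinct vertices,
labels are sets of vertices, and each edge is included in its labels. -/
def BLGraph.IsBL (G : BLGraph) : Prop :=
  ∀ e X, G.rel e X → ¬ e.IsDiag ∧ X ⊆ G.verts ∧ ∀ v ∈ e, v ∈ X

def BLGraph.Edges (G : BLGraph) : Set (Sym2 ℕ) := {e | ∃ X, G.rel e X}

def BLGraph.Br (G : BLGraph) : Set (Set ℕ) := {X | ∃ e, G.rel e X}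

def BLGraph.union (G H : BLGraph) : BLGraph :=
  ⟨G.verts ∪ H.verts, fun e X => G.rel e X ∨ H.rel e X⟩

/-- Restriction `G↾_S` of a bl-graph. -/
def BLGraph.restrict (G : BLGraph) (S : Set ℕ) : BLGraph :=
  ⟨G.verts ∩ S, fun e X => G.rel e X ∧ X ⊆ S⟩

/-- The interface-relativized edge-branch relation `e ⊰^I_G X`. -/
def BLGraph.relI (G : BLGraph) (I : Set ℕ) (e : Sym2 ℕ) (X : Set ℕ) : Prop :=
  ∃ Y, G.rel e Y ∧ X = Y \ I

/-- `z 0, …, z (n-1)` is an `X`-labeled alternating path between `G` and `H`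
through the interface `I`. -/
def AltPath (G H : BLGraph) (I X : Set ℕ) (n : ℕ) (z : ℕ → ℕ) : Prop :=
  1 < n ∧
  (∀ i < n, ∀ j < n, z i = z j → i = j) ∧
  (∀ i, 0 < i → i + 1 < n → z i ∈ I) ∧
  ((∀ i, i + 1 < n →
      (Even i → G.relI I s(z i, z (i + 1)) X) ∧ (¬ Even i → H.relI I s(z i, z (i + 1)) X)) ∨
   (∀ i, i + 1 < n →
      (Even i → H.relI I s(z i, z (i + 1)) X) ∧ (¬ Even i → G.relI I s(z i, z (i + 1)) X)))

/-- Composition of bl-graphs over an interface `I`. -/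
def BLGraph.comp (G H : BLGraph) (I : Set ℕ) : BLGraph :=
  ⟨(G.verts ∪ H.verts) \ I,
   fun e X => ∃ n z, AltPath G H I X n z ∧ z 0 ∉ I ∧ z (n - 1) ∉ I ∧
     e = s(z 0, z (n - 1))⟩

/-- The weakening operator on bl-graphs: add vertices `V` and extend every
branch label by a member of `Brs`. -/
def blwk (V : Set ℕ) (Brs : Set (Set ℕ)) (G : BLGraph) : BLGraph :=
  ⟨G.verts ∪ V, fun e X => ∃ Y Z, G.rel e Y ∧ Z ∈ Brs ∧ X = Y ∪ Z⟩

/-- The bl-identity graph `id_{A,C}` on a pair of dual formulas. -/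
def blid : NForm α → NForm α → BLGraph
  | .atom x _, .atom y _ => ⟨{x, y}, fun e X => e = s(x, y) ∧ X = {x, y}⟩
  | .or A1 A2, .and C1 C2 =>
      (blwk A2.names (BrF A2) (blid A1 C1)).union (blwk A1.names (BrF A1) (blid A2 C2))
  | .and A1 A2, .or C1 C2 =>
      (blwk C2.names (BrF C2) (blid A1 C1)).union (blwk C1.names (BrF C1) (blid A2 C2))
  | _, _ => ⟨∅, fun _ _ => False⟩

/-! ## Simple name graphs -/

/-- A simple name graph. -/
structure NGraph : Type where
  verts : Set ℕ
  edges : Set (Sym2 ℕ)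

/-- Subgraph relation `H ⊑ G`. -/
def NGraph.Sub (H G : NGraph) : Prop := H.verts ⊆ G.verts ∧ H.edges ⊆ G.edges

def NGraph.union (G H : NGraph) : NGraph := ⟨G.verts ∪ H.verts, G.edges ∪ H.edges⟩

/-- Induced subgraph `G↾_S`. -/
def NGraph.restrict (G : NGraph) (S : Set ℕ) : NGraph :=
  ⟨G.verts ∩ S, {e ∈ G.edges | ∀ v ∈ e, v ∈ S}⟩

/-- Alternating paths between simple name graphs through an interface. -/
def NAltPath (G H : NGraph) (I : Set ℕ) (n : ℕ) (z : ℕ → ℕ) : Prop :=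
  0 < n ∧
  (∀ i < n, ∀ j < n, z i = z j → i = j) ∧
  (∀ i, 0 < i → i + 1 < n → z i ∈ I) ∧
  ((∀ i, i + 1 < n →
      (Even i → s(z i, z (i + 1)) ∈ G.edges) ∧ (¬ Even i → s(z i, z (i + 1)) ∈ H.edges)) ∨
   (∀ i, i + 1 < n →
      (Even i → s(z i, z (i + 1)) ∈ H.edges) ∧ (¬ Even i → s(z i, z (i + 1)) ∈ G.edges)))

/-- Composition of simple name graphs over an interface. -/
def NGraph.comp (G H : NGraph) (I : Set ℕ) : NGraph :=
  ⟨(G.verts ∪ H.verts) \ I,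
   {e | ∃ x y, x ≠ y ∧ x ∈ (G.verts ∪ H.verts) \ I ∧ y ∈ (G.verts ∪ H.verts) \ I ∧
        e = s(x, y) ∧ ∃ n z, NAltPath G H I n z ∧ z 0 = x ∧ z (n - 1) = y}⟩

/-- The identity graph `Id_{A,C}` on a pair of dual formulas. -/
def idg : NForm α → NForm α → NGraph
  | .atom x _, .atom y _ => ⟨{x, y}, {s(x, y)}⟩
  | .or A1 A2, .and C1 C2 => (idg A1 C1).union (idg A2 C2)
  | .and A1 A2, .or C1 C2 => (idg A1 C1).union (idg A2 C2)
  | _, _ => ⟨∅, ∅⟩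

/-- The edgeless (weakening) graph on the names of `Γ`. -/
def wkg (Γ : Finset (NForm α)) : NGraph := ⟨snames Γ, ∅⟩

/-! ## Named GS4 derivations -/

/-- Named GS4 derivation trees. -/
inductive Deriv (α : Type) : Type
  | ax (Γ : Finset (NForm α)) (A C : NForm α)
  | cut (A : NForm α) (P Q : Deriv α)
  | sup (P Q : Deriv α)
  | orI (A B : NForm α) (P : Deriv α)
  | andI (A B : NForm α) (P Q : Deriv α)

/-- Conclusion of a derivation tree. -/
def concl : Deriv α → Finset (NForm α)
  | .ax Γ A C => insert A (insert C Γ)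
  | .cut A P _ => (concl P).erase A
  | .sup P _ => concl P
  | .orI A B P => insert (NForm.or A B) (((concl P).erase A).erase B)
  | .andI A B P _ => insert (NForm.and A B) ((concl P).erase A)

/-- Well-formedness of derivation trees w.r.t. the atom involution `bar`:
each rule is applied correctly to sharing-free named sequents. -/
def WF (bar : α → α) : Deriv α → Prop
  | .ax Γ A C =>
      A.shape = (negF bar C).shape ∧
      A.sharingFree ∧ C.sharingFree ∧ SFSet Γ ∧
      Disjoint A.names C.names ∧
      Disjoint A.names (snames Γ) ∧ Disjoint C.names (snames Γ)
  | .cut A P Q =>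
      WF bar P ∧ WF bar Q ∧
      ∃ Γ : Finset (NForm α), A ∉ Γ ∧ negF bar A ∉ Γ ∧
        concl P = insert A Γ ∧ concl Q = insert (negF bar A) Γ ∧
        A.sharingFree ∧ SFSet Γ ∧ Disjoint A.names (snames Γ)
  | .sup P Q => WF bar P ∧ WF bar Q ∧ concl P = concl Q
  | .orI A B P =>
      WF bar P ∧
      ∃ Γ : Finset (NForm α), A ∉ Γ ∧ B ∉ Γ ∧ A ≠ B ∧
        concl P = insert A (insert B Γ) ∧
        A.sharingFree ∧ B.sharingFree ∧ SFSet Γ ∧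
        Disjoint A.names B.names ∧
        Disjoint A.names (snames Γ) ∧ Disjoint B.names (snames Γ)
  | .andI A B P Q =>
      WF bar P ∧ WF bar Q ∧
      ∃ Γ : Finset (NForm α), A ∉ Γ ∧ B ∉ Γ ∧
        concl P = insert A Γ ∧ concl Q = insert B Γ ∧
        A.sharingFree ∧ B.sharingFree ∧ SFSet Γ ∧
        Disjoint A.names B.names ∧
        Disjoint A.names (snames Γ) ∧ Disjoint B.names (snames Γ)

/-- A derivation is cut-free if it contains no cut rule. -/
def CutFree : Deriv α → Prop
  | .ax _ _ _ => True
  | .cut _ _ _ => False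
  | .sup P Q => CutFree P ∧ CutFree Q
  | .orI _ _ P => CutFree P
  | .andI _ _ P Q => CutFree P ∧ CutFree Q

/-- The branch-labeled axiom graph `⟨⟨P⟩⟩` of a derivation. -/
def blaxg : Deriv α → BLGraph
  | .ax Γ A C => blwk (snames Γ) (BrS Γ) (blid A C)
  | .cut A P Q => BLGraph.comp (blaxg P) (blaxg Q) A.names
  | .sup P Q => (blaxg P).union (blaxg Q)
  | .orI _ _ P => blaxg P
  | .andI _ _ P Q => (blaxg P).union (blaxg Q)

/-- The (simple) axiom graph `⟦P⟧` of a derivation. -/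
def axg : Deriv α → NGraph
  | .ax Γ A C => (wkg Γ).union (idg A C)
  | .cut A P Q => NGraph.comp (axg P) (axg Q) A.names
  | .sup P Q => (axg P).union (axg Q)
  | .orI _ _ P => axg P
  | .andI _ _ P Q => (axg P).union (axg Q)

/-! ## Inversion and isolation -/

/-- Inversion of a disjunction `D ∨ E` in the conclusion. -/
def inv (D E : NForm α) : Deriv α → Deriv α
  | .ax Γ A C =>
      if A = NForm.or D E then
        match C with
        | .and C1 C2 =>
            .andI C1 C2 (.ax (insert E Γ) D C1) (.ax (insert D Γ) E C2)
        | _ => .ax Γ A C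
      else if C = NForm.or D E then
        match A with
        | .and A1 A2 =>
            .andI A1 A2 (.ax (insert E Γ) A1 D) (.ax (insert D Γ) A2 E)
        | _ => .ax Γ A C
      else
        .ax (insert D (insert E (Γ.erase (NForm.or D E)))) A C
  | .cut A P Q => .cut A (inv D E P) (inv D E Q)
  | .sup P Q => .sup (inv D E P) (inv D E Q)
  | .orI A B P => if A = D ∧ B = E then P else .orI A B (inv D E P)
  | .andI A B P Q => .andI A B (inv D E P) (inv D E Q)

/-- Left inversion of a conjunction `D ∧ E` in the conclusion. -/
def invl (D E : NForm α) : Deriv α → Deriv α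
  | .ax Γ A C =>
      if A = NForm.and D E then
        match C with
        | .or C1 C2 => .orI C1 C2 (.ax (insert C2 Γ) D C1)
        | _ => .ax Γ A C
      else if C = NForm.and D E then
        match A with
        | .or A1 A2 => .orI A1 A2 (.ax (insert A2 Γ) A1 D)
        | _ => .ax Γ A C
      else
        .ax (insert D (Γ.erase (NForm.and D E))) A C
  | .cut A P Q => .cut A (invl D E P) (invl D E Q)
  | .sup P Q => .sup (invl D E P) (invl D E Q)
  | .orI A B P => .orI A B (invl D E P)
  | .andI A B P Q => if A = D ∧ B = E then P else .andI A B (invl D E P) (invl D E Q)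

/-- Right inversion of a conjunction `D ∧ E` in the conclusion. -/
def invr (D E : NForm α) : Deriv α → Deriv α
  | .ax Γ A C =>
      if A = NForm.and D E then
        match C with
        | .or C1 C2 => .orI C1 C2 (.ax (insert C1 Γ) E C2)
        | _ => .ax Γ A C
      else if C = NForm.and D E then
        match A with
        | .or A1 A2 => .orI A1 A2 (.ax (insert A1 Γ) A2 E)
        | _ => .ax Γ A C
      else
        .ax (insert E (Γ.erase (NForm.and D E))) A C
  | .cut A P Q => .cut A (invr D E P) (invr D E Q)
  | .sup P Q => .sup (invr D E P) (invr D E Q)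
  | .orI A B P => .orI A B (invr D E P)
  | .andI A B P Q => if A = D ∧ B = E then Q else .andI A B (invr D E P) (invr D E Q)

/-- Isolation of a non-atomic formula in the conclusion. -/
def isl : NForm α → Deriv α → Deriv α
  | .or A B, P => .orI A B (inv A B P)
  | .and A B, P => .andI A B (invl A B P) (invr A B P)
  | .atom _ _, P => P

/-- Totality of a bl-graph w.r.t. a sharing-free named sequent. -/
def Total (bar : α → α) (G : BLGraph) (Γ : Finset (NForm α)) : Prop :=
  G.verts = snames Γ ∧
  G.Br = BrS Γ ∧
  ∀ x y : ℕ, s(x, y) ∈ G.Edges →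
    ∀ a b : α, HasAtomS Γ x a → HasAtomS Γ y b → a = bar b

end GS4

namespace GS4

variable {α : Type} {bar : α → α} {Γ : Finset (NForm α)} {A B C D E : NForm α}
  {X : Set ℕ}

/-! ## Names and branches -/

theorem names_negF (bar : α → α) (A : NForm α) : (negF bar A).names = A.names := by
  induction A <;> simp_all [negF, NForm.names]

theorem subset_names_of_mem_BrF (hX : X ∈ BrF A) : X ⊆ A.names := by
  induction A generalizing X with
  | atom x a => exact (Set.mem_singleton_iff.1 hX).subset
  | or A B ihA ihB =>
    obtain ⟨Y, hY, Z, hZ, rfl⟩ := hX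
    exact Set.union_subset_union (ihA hY) (ihB hZ)
  | and A B ihA ihB =>
    rcases hX with hX | hX
    · exact (ihA hX).trans Set.subset_union_left
    · exact (ihB hX).trans Set.subset_union_right

theorem nonempty_of_mem_BrF (hX : X ∈ BrF A) : X.Nonempty := by
  induction A generalizing X with
  | atom x a => exact (Set.mem_singleton_iff.1 hX) ▸ Set.singleton_nonempty x
  | or A B ihA _ =>
    obtain ⟨Y, hY, Z, _, rfl⟩ := hX
    exact (ihA hY).inl
  | and A B ihA ihB => exact hX.elim ihA ihB

theorem snames_insert (A : NForm α) (Γ : Finset (NForm α)) :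
    snames (insert A Γ) = A.names ∪ snames Γ := by
  simp [snames]

theorem names_subset_snames (hA : A ∈ Γ) : A.names ⊆ snames Γ :=
  Set.subset_biUnion_of_mem (u := fun A : NForm α => A.names) hA

theorem mem_BrS_insert (h : Disjoint A.names (snames Γ)) :
    X ∈ BrS (insert A Γ) ↔ ∃ Y ∈ BrF A, ∃ Z ∈ BrS Γ, X = Y ∪ Z := by
  constructor
  · rintro ⟨hX, hbr⟩
    refine ⟨X ∩ A.names, hbr A (Finset.mem_insert_self _ _), X ∩ snames Γ,
      ⟨Set.inter_subset_right, fun B hB => ?_⟩, ?_⟩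
    · rw [Set.inter_assoc, Set.inter_eq_right.2 (names_subset_snames hB)]
      exact hbr B (Finset.mem_insert_of_mem hB)
    · rw [← Set.inter_union_distrib_left, ← snames_insert, Set.inter_eq_left.2 hX]
  · rintro ⟨Y, hY, Z, ⟨hZ, hbr⟩, rfl⟩
    have hYA := subset_names_of_mem_BrF hY
    refine ⟨snames_insert A Γ ▸ Set.union_subset_union hYA hZ, fun B hB => ?_⟩
    rw [Set.union_inter_distrib_right]
    rcases Finset.mem_insert.1 hB with rfl | hB
    · rwa [Set.inter_eq_left.2 hYA, (h.symm.mono_left hZ).inter_eq, Set.union_empty]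
    · rw [(h.mono hYA (names_subset_snames hB)).inter_eq, Set.empty_union]
      exact hbr B hB

theorem BrS_insert_or (hDE : Disjoint D.names E.names) (hD : Disjoint D.names (snames Γ))
    (hE : Disjoint E.names (snames Γ)) :
    BrS (insert D (insert E Γ)) = BrS (insert (NForm.or D E) Γ) := by
  ext X
  rw [mem_BrS_insert (snames_insert E Γ ▸ Set.disjoint_union_right.2 ⟨hDE, hD⟩),
    mem_BrS_insert (A := NForm.or D E) (Set.disjoint_union_left.2 ⟨hD, hE⟩)]
  simp only [mem_BrS_insert hE]
  constructor
  · rintro ⟨Y, hY, _, ⟨Z, hZ, W, hW, rfl⟩, rfl⟩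
    exact ⟨_, ⟨Y, hY, Z, hZ, rfl⟩, W, hW, (Set.union_assoc _ _ _).symm⟩
  · rintro ⟨_, ⟨Y, hY, Z, hZ, rfl⟩, W, hW, rfl⟩
    exact ⟨Y, hY, _, ⟨Z, hZ, W, hW, rfl⟩, Set.union_assoc _ _ _⟩

theorem mem_BrS_insert_and (hD : Disjoint D.names (snames Γ))
    (hE : Disjoint E.names (snames Γ)) :
    X ∈ BrS (insert (NForm.and D E) Γ) ↔ X ∈ BrS (insert D Γ) ∨ X ∈ BrS (insert E Γ) := by
  rw [mem_BrS_insert hD, mem_BrS_insert hE,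
    mem_BrS_insert (A := NForm.and D E) (Set.disjoint_union_left.2 ⟨hD, hE⟩)]
  simp only [BrF, Set.mem_union, or_and_right, exists_or]

theorem subset_compl_of_mem_BrS_insert (hDE : Disjoint D.names E.names)
    (hE : Disjoint E.names (snames Γ)) (hX : X ∈ BrS (insert D Γ)) : X ⊆ E.namesᶜ :=
  hX.1.trans (snames_insert D Γ ▸ Set.subset_compl_iff_disjoint_right.2
    (Set.disjoint_union_left.2 ⟨hDE, hE.symm⟩))

theorem not_subset_compl_of_mem_BrS (hE : E ∈ Γ) (hX : X ∈ BrS Γ) : ¬ X ⊆ E.namesᶜ := by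
  intro h
  obtain ⟨x, hx, hxE⟩ := nonempty_of_mem_BrF (hX.2 E hE)
  exact h hx hxE

theorem SFSet.insert (hΓ : SFSet Γ) (hA : A.sharingFree) (h : Disjoint A.names (snames Γ)) :
    SFSet (insert A Γ) := by
  refine ⟨fun B hB => ?_, fun B hB C hC hBC => ?_⟩
  · rcases Finset.mem_insert.1 hB with rfl | hB
    exacts [hA, hΓ.1 B hB]
  · rcases Finset.mem_insert.1 hB with rfl | hBΓ <;>
      rcases Finset.mem_insert.1 hC with rfl | hCΓ
    · exact absurd rfl hBC
    · exact h.mono_right (names_subset_snames hCΓ)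
    · exact h.symm.mono_left (names_subset_snames hBΓ)
    · exact hΓ.2 B hBΓ C hCΓ hBC

theorem SFSet.exists_eq_insert (hΓ : SFSet Γ) (hA : A ∈ Γ) :
    A.sharingFree ∧ Disjoint A.names (snames (Γ.erase A)) ∧ Γ = Insert.insert A (Γ.erase A) := by
  refine ⟨hΓ.1 A hA, ?_, (Finset.insert_erase hA).symm⟩
  simp only [snames, Set.disjoint_iUnion_right]
  intro B hB
  exact hΓ.2 A hA B (Finset.mem_of_mem_erase hB) (Finset.ne_of_mem_erase hB).symm

/-! ## Operations on branch-labeled graphs -/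

theorem BLGraph.ext {G H : BLGraph} (hv : G.verts = H.verts)
    (hr : ∀ e X, G.rel e X ↔ H.rel e X) : G = H := by
  cases G
  cases H
  simp only [BLGraph.mk.injEq]
  exact ⟨hv, funext₂ fun e X => propext (hr e X)⟩

theorem BLGraph.union_comm (G H : BLGraph) : G.union H = H.union G :=
  BLGraph.ext (Set.union_comm _ _) fun _ _ => or_comm

theorem BLGraph.restrict_union (G H : BLGraph) (S : Set ℕ) :
    (G.union H).restrict S = (G.restrict S).union (H.restrict S) :=
  BLGraph.ext (Set.union_inter_distrib_right _ _ _) fun _ _ => or_and_right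

theorem blwk_union (V : Set ℕ) (Brs : Set (Set ℕ)) (G H : BLGraph) :
    blwk V Brs (G.union H) = (blwk V Brs G).union (blwk V Brs H) := by
  refine BLGraph.ext (Set.union_union_distrib_right _ _ _) fun e X => ?_
  simp only [blwk, BLGraph.union, or_and_right, exists_or]

theorem blwk_blwk_names (h : Disjoint A.names (snames Γ)) (G : BLGraph) :
    blwk (snames Γ) (BrS Γ) (blwk A.names (BrF A) G) =
      blwk (snames (insert A Γ)) (BrS (insert A Γ)) G := by
  refine BLGraph.ext ?_ fun e X => ?_
  · simp only [blwk, snames_insert, Set.union_assoc]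
  · simp only [blwk, mem_BrS_insert h]
    constructor
    · rintro ⟨_, W, ⟨Y, Z, hY, hZ, rfl⟩, hW, rfl⟩
      exact ⟨Y, _, hY, ⟨Z, hZ, W, hW, rfl⟩, Set.union_assoc _ _ _⟩
    · rintro ⟨Y, _, hY, ⟨Z, hZ, W, hW, rfl⟩, rfl⟩
      exact ⟨_, W, ⟨Y, Z, hY, hZ, rfl⟩, hW, (Set.union_assoc _ _ _).symm⟩

theorem BLGraph.relI_restrict_compl {I N : Set ℕ} (hIN : Disjoint I N) (G : BLGraph)
    (e : Sym2 ℕ) (X : Set ℕ) :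
    (G.restrict Nᶜ).relI I e X ↔ G.relI I e X ∧ X ⊆ Nᶜ := by
  simp only [BLGraph.relI, BLGraph.restrict]
  constructor
  · rintro ⟨Y, ⟨hY, hYN⟩, rfl⟩
    exact ⟨⟨Y, hY, rfl⟩, Set.sdiff_subset.trans hYN⟩
  · rintro ⟨⟨Y, hY, rfl⟩, hX⟩
    refine ⟨Y, ⟨hY, fun y hy hyN => ?_⟩, rfl⟩
    exact hX ⟨hy, Set.disjoint_right.1 hIN hyN⟩ hyN

theorem altPath_restrict_compl {I N : Set ℕ} (hIN : Disjoint I N) (G H : BLGraph)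
    (n : ℕ) (z : ℕ → ℕ) :
    AltPath (G.restrict Nᶜ) (H.restrict Nᶜ) I X n z ↔ AltPath G H I X n z ∧ X ⊆ Nᶜ := by
  simp only [AltPath, BLGraph.relI_restrict_compl hIN]
  constructor
  · rintro ⟨hn, hinj, hint, hedge⟩
    have hX : X ⊆ Nᶜ := by
      rcases hedge with h | h <;> exact ((h 0 hn).1 Even.zero).2
    refine ⟨⟨hn, hinj, hint, ?_⟩, hX⟩
    exact hedge.imp (fun h i hi => ⟨fun he => ((h i hi).1 he).1, fun he => ((h i hi).2 he).1⟩)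
      (fun h i hi => ⟨fun he => ((h i hi).1 he).1, fun he => ((h i hi).2 he).1⟩)
  · rintro ⟨⟨hn, hinj, hint, hedge⟩, hX⟩
    refine ⟨hn, hinj, hint, ?_⟩
    exact hedge.imp
      (fun h i hi => ⟨fun he => ⟨(h i hi).1 he, hX⟩, fun he => ⟨(h i hi).2 he, hX⟩⟩)
      (fun h i hi => ⟨fun he => ⟨(h i hi).1 he, hX⟩, fun he => ⟨(h i hi).2 he, hX⟩⟩)

theorem BLGraph.restrict_comp {I N : Set ℕ} (hIN : Disjoint I N) (G H : BLGraph) :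
    (G.comp H I).restrict Nᶜ = (G.restrict Nᶜ).comp (H.restrict Nᶜ) I := by
  refine BLGraph.ext ?_ fun e X => ?_
  · ext x
    simp only [BLGraph.restrict, BLGraph.comp, Set.mem_inter_iff, Set.mem_sdiff, Set.mem_union]
    tauto
  · simp only [BLGraph.restrict, BLGraph.comp]
    constructor
    · rintro ⟨⟨n, z, hz, h⟩, hX⟩
      exact ⟨n, z, (altPath_restrict_compl hIN G H n z).2 ⟨hz, hX⟩, h⟩
    · rintro ⟨n, z, hz, h⟩
      obtain ⟨hz, hX⟩ := (altPath_restrict_compl hIN G H n z).1 hz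
      exact ⟨⟨n, z, hz, h⟩, hX⟩

theorem exists_BrF_of_blid_rel {e : Sym2 ℕ} (h : (blid A C).rel e X) :
    ∃ Y ∈ BrF A, ∃ Z ∈ BrF C, X = Y ∪ Z := by
  induction A generalizing C X with
  | atom x a =>
    cases C with
    | atom y c => exact ⟨{x}, rfl, {y}, rfl, h.2⟩
    | or _ _ => exact h.elim
    | and _ _ => exact h.elim
  | or A₁ A₂ ih₁ ih₂ =>
    cases C with
    | atom y c => exact h.elim
    | or _ _ => exact h.elim
    | and C₁ C₂ =>
      rcases h with ⟨_, W, h, hW, rfl⟩ | ⟨_, W, h, hW, rfl⟩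
      · obtain ⟨Y, hY, Z, hZ, rfl⟩ := ih₁ h
        exact ⟨_, ⟨Y, hY, W, hW, rfl⟩, Z, Or.inl hZ, Set.union_right_comm _ _ _⟩
      · obtain ⟨Y, hY, Z, hZ, rfl⟩ := ih₂ h
        refine ⟨_, ⟨W, hW, Y, hY, rfl⟩, Z, Or.inr hZ, ?_⟩
        rw [Set.union_comm W Y, Set.union_right_comm]
  | and A₁ A₂ ih₁ ih₂ =>
    cases C with
    | atom y c => exact h.elim
    | and _ _ => exact h.elim
    | or C₁ C₂ =>
      rcases h with ⟨_, W, h, hW, rfl⟩ | ⟨_, W, h, hW, rfl⟩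
      · obtain ⟨Y, hY, Z, hZ, rfl⟩ := ih₁ h
        exact ⟨Y, Or.inl hY, _, ⟨Z, hZ, W, hW, rfl⟩, Set.union_assoc _ _ _⟩
      · obtain ⟨Y, hY, Z, hZ, rfl⟩ := ih₂ h
        refine ⟨Y, Or.inr hY, _, ⟨W, hW, Z, hZ, rfl⟩, ?_⟩
        rw [Set.union_comm W Z, Set.union_assoc]

theorem blid_verts (h : A.shape = (negF bar C).shape) :
    (blid A C).verts = A.names ∪ C.names := by
  induction A generalizing C with
  | atom x a =>
    cases C with
    | atom _ _ => rfl
    | or _ _ => simp [NForm.shape, negF] at h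
    | and _ _ => simp [NForm.shape, negF] at h
  | or A₁ A₂ ih₁ ih₂ =>
    cases C with
    | atom _ _ => simp [NForm.shape, negF] at h
    | or _ _ => simp [NForm.shape, negF] at h
    | and C₁ C₂ =>
      simp only [NForm.shape, negF, Shape.or.injEq] at h
      simp only [blid, BLGraph.union, blwk, ih₁ h.1, ih₂ h.2, NForm.names]
      ext x
      simp only [Set.mem_union]
      tauto
  | and A₁ A₂ ih₁ ih₂ =>
    cases C with
    | atom _ _ => simp [NForm.shape, negF] at h
    | and _ _ => simp [NForm.shape, negF] at h
    | or C₁ C₂ =>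
      simp only [NForm.shape, negF, Shape.and.injEq] at h
      simp only [blid, BLGraph.union, blwk, ih₁ h.1, ih₂ h.2, NForm.names]
      ext x
      simp only [Set.mem_union]
      tauto

/-! ## Conclusions of derivations -/

theorem concl_orI {P : Deriv α} (hAB : A ≠ B) (hA : A ∉ Γ) (hB : B ∉ Γ)
    (h : concl P = insert A (insert B Γ)) : concl (.orI A B P) = insert (NForm.or A B) Γ := by
  rw [concl, h, Finset.erase_insert (by simp [hAB, hA]), Finset.erase_insert hB]

theorem concl_andI {P Q : Deriv α} (hA : A ∉ Γ) (h : concl P = insert A Γ) :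
    concl (.andI A B P Q) = insert (NForm.and A B) Γ := by
  rw [concl, h, Finset.erase_insert hA]

theorem concl_cut {P Q : Deriv α} (hA : A ∉ Γ) (h : concl P = insert A Γ) :
    concl (.cut A P Q) = Γ := by
  rw [concl, h, Finset.erase_insert hA]

theorem WF.sfSet_concl {P : Deriv α} (hP : WF bar P) : SFSet (concl P) := by
  induction P with
  | ax Γ A C =>
    obtain ⟨_, hA, hC, hΓ, hAC, hAΓ, hCΓ⟩ := hP
    exact (hΓ.insert hC hCΓ).insert hA (snames_insert C Γ ▸ Set.disjoint_union_right.2 ⟨hAC, hAΓ⟩)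
  | cut A P Q _ _ =>
    obtain ⟨_, _, Γ, hA, _, hP, _, _, hΓ, _⟩ := hP
    rwa [concl_cut hA hP]
  | sup P Q ihP _ => exact ihP hP.1
  | orI A B P _ =>
    obtain ⟨_, Γ, hA, hB, hne, hP, hAs, hBs, hΓ, hAB, hAΓ, hBΓ⟩ := hP
    rw [concl_orI hne hA hB hP]
    exact hΓ.insert (A := NForm.or A B) ⟨hAs, hBs, hAB⟩ (Set.disjoint_union_left.2 ⟨hAΓ, hBΓ⟩)
  | andI A B P Q _ _ =>
    obtain ⟨_, _, Γ, hA, _, hP, _, hAs, hBs, hΓ, hAB, hAΓ, hBΓ⟩ := hP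
    rw [concl_andI hA hP]
    exact hΓ.insert (A := NForm.and A B) ⟨hAs, hBs, hAB⟩ (Set.disjoint_union_left.2 ⟨hAΓ, hBΓ⟩)

theorem diff_names_mem_BrS (h : Disjoint A.names (snames Γ)) (hX : X ∈ BrS (insert A Γ)) :
    X \ A.names ∈ BrS Γ := by
  obtain ⟨Y, hY, Z, hZ, rfl⟩ := (mem_BrS_insert h).1 hX
  rwa [Set.union_sdiff_distrib, Set.sdiff_eq_empty.2 (subset_names_of_mem_BrF hY), Set.empty_union,
    (h.symm.mono_left hZ.1).sdiff_eq_left]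

theorem blaxg_verts {P : Deriv α} (hP : WF bar P) : (blaxg P).verts = snames (concl P) := by
  induction P with
  | ax Γ A C =>
    simp only [blaxg, blwk, concl, snames_insert, blid_verts hP.1, Set.union_assoc]
  | cut A P Q ihP ihQ =>
    obtain ⟨hPw, hQw, Γ, hA, _, hP, hQ, _, _, hAΓ⟩ := hP
    rw [concl_cut hA hP]
    simp only [blaxg, BLGraph.comp, ihP hPw, ihQ hQw, hP, hQ, snames_insert, names_negF,
      Set.union_self]
    rw [Set.union_sdiff_left, hAΓ.symm.sdiff_eq_left]
  | sup P Q ihP ihQ =>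
    obtain ⟨hPw, hQw, h⟩ := hP
    simp only [blaxg, BLGraph.union, concl, ihP hPw, ihQ hQw, h, Set.union_self]
  | orI A B P ihP =>
    obtain ⟨hPw, Γ, hA, hB, hne, hP, _⟩ := hP
    rw [concl_orI hne hA hB hP]
    simp only [blaxg, ihP hPw, hP, snames_insert, NForm.names, Set.union_assoc]
  | andI A B P Q ihP ihQ =>
    obtain ⟨hPw, hQw, Γ, hA, _, hP, hQ, _⟩ := hP
    rw [concl_andI hA hP]
    simp only [blaxg, BLGraph.union, ihP hPw, ihQ hQw, hP, hQ, snames_insert, NForm.names,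
      ← Set.union_union_distrib_right]

theorem mem_BrS_of_blaxg_rel {P : Deriv α} (hP : WF bar P) {e : Sym2 ℕ}
    (h : (blaxg P).rel e X) : X ∈ BrS (concl P) := by
  induction P generalizing e X with
  | ax Γ A C =>
    obtain ⟨_, _, _, _, hAC, hAΓ, hCΓ⟩ := hP
    obtain ⟨_, W, h, hW, rfl⟩ := h
    obtain ⟨Y, hY, Z, hZ, rfl⟩ := exists_BrF_of_blid_rel h
    rw [concl, mem_BrS_insert (snames_insert C Γ ▸ Set.disjoint_union_right.2 ⟨hAC, hAΓ⟩)]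
    exact ⟨Y, hY, _, (mem_BrS_insert hCΓ).2 ⟨Z, hZ, W, hW, rfl⟩, Set.union_assoc _ _ _⟩
  | cut A P Q ihP ihQ =>
    obtain ⟨hPw, hQw, Γ, hA, _, hP, hQ, _, _, hAΓ⟩ := hP
    rw [concl_cut hA hP]
    obtain ⟨n, z, ⟨hn, _, _, hedge⟩, _⟩ := h
    rcases hedge with h | h <;> obtain ⟨Y, hY, rfl⟩ := (h 0 hn).1 Even.zero
    · exact diff_names_mem_BrS hAΓ (hP ▸ ihP hPw hY)
    · rw [← names_negF bar A] at hAΓ ⊢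
      exact diff_names_mem_BrS hAΓ (hQ ▸ ihQ hQw hY)
  | sup P Q ihP ihQ =>
    obtain ⟨hPw, hQw, hPQ⟩ := hP
    rcases h with h | h
    · exact ihP hPw h
    · rw [concl, hPQ]
      exact ihQ hQw h
  | orI A B P ihP =>
    obtain ⟨hPw, Γ, hA, hB, hne, hP, _, _, _, hAB, hAΓ, hBΓ⟩ := hP
    rw [concl_orI hne hA hB hP, ← BrS_insert_or hAB hAΓ hBΓ, ← hP]
    exact ihP hPw h
  | andI A B P Q ihP ihQ =>
    obtain ⟨hPw, hQw, Γ, hA, _, hP, hQ, _, _, _, _, hAΓ, hBΓ⟩ := hP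
    rw [concl_andI hA hP, mem_BrS_insert_and hAΓ hBΓ, ← hP, ← hQ]
    exact h.imp (ihP hPw) (ihQ hQw)

/-! ## Expansion of axioms -/

theorem blaxg_ax_or_and {A₁ A₂ C₁ C₂ : NForm α} (h₁ : Disjoint A₁.names (snames Γ))
    (h₂ : Disjoint A₂.names (snames Γ)) :
    blaxg (.ax Γ (.or A₁ A₂) (.and C₁ C₂)) =
      (blaxg (.ax (insert A₂ Γ) A₁ C₁)).union (blaxg (.ax (insert A₁ Γ) A₂ C₂)) := by
  simp only [blaxg, blid, blwk_union, blwk_blwk_names h₁, blwk_blwk_names h₂]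

theorem blaxg_ax_and_or {A₁ A₂ C₁ C₂ : NForm α} (h₁ : Disjoint C₁.names (snames Γ))
    (h₂ : Disjoint C₂.names (snames Γ)) :
    blaxg (.ax Γ (.and A₁ A₂) (.or C₁ C₂)) =
      (blaxg (.ax (insert C₂ Γ) A₁ C₁)).union (blaxg (.ax (insert C₁ Γ) A₂ C₂)) := by
  simp only [blaxg, blid, blwk_union, blwk_blwk_names h₁, blwk_blwk_names h₂]

theorem WF.ax_or_and {A₁ A₂ C₁ C₂ : NForm α} (h : WF bar (.ax Γ (.or A₁ A₂) (.and C₁ C₂))) :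
    WF bar (.ax (insert A₂ Γ) A₁ C₁) ∧ WF bar (.ax (insert A₁ Γ) A₂ C₂) := by
  simp only [WF, NForm.shape, negF, Shape.or.injEq, NForm.sharingFree, NForm.names,
    Set.disjoint_union_left, Set.disjoint_union_right, snames_insert] at h ⊢
  obtain ⟨⟨hs₁, hs₂⟩, ⟨hA₁, hA₂, hA⟩, ⟨hC₁, hC₂, hC⟩, hΓ, ⟨⟨h₁₁, h₂₁⟩, h₁₂, h₂₂⟩,
    ⟨h₁, h₂⟩, k₁, k₂⟩ := h
  exact ⟨⟨hs₁, hA₁, hC₁, hΓ.insert hA₂ h₂, h₁₁, ⟨hA, h₁⟩, h₂₁.symm, k₁⟩,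
    ⟨hs₂, hA₂, hC₂, hΓ.insert hA₁ h₁, h₂₂, ⟨hA.symm, h₂⟩, h₁₂.symm, k₂⟩⟩

theorem WF.ax_and_or {A₁ A₂ C₁ C₂ : NForm α} (h : WF bar (.ax Γ (.and A₁ A₂) (.or C₁ C₂))) :
    WF bar (.ax (insert C₂ Γ) A₁ C₁) ∧ WF bar (.ax (insert C₁ Γ) A₂ C₂) := by
  simp only [WF, NForm.shape, negF, Shape.and.injEq, NForm.sharingFree, NForm.names,
    Set.disjoint_union_left, Set.disjoint_union_right, snames_insert] at h ⊢
  obtain ⟨⟨hs₁, hs₂⟩, ⟨hA₁, hA₂, hA⟩, ⟨hC₁, hC₂, hC⟩, hΓ, ⟨⟨h₁₁, h₂₁⟩, h₁₂, h₂₂⟩,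
    ⟨h₁, h₂⟩, k₁, k₂⟩ := h
  exact ⟨⟨hs₁, hA₁, hC₁, hΓ.insert hC₂ k₂, h₁₁, ⟨h₁₂, h₁⟩, hC, k₁⟩,
    ⟨hs₂, hA₂, hC₂, hΓ.insert hC₁ k₁, h₂₂, ⟨h₂₁, h₂⟩, hC.symm, k₂⟩⟩

/-! ## Inversion -/

theorem blaxg_inv {P : Deriv α} (hP : WF bar P) (h : NForm.or D E ∈ concl P) :
    blaxg (inv D E P) = blaxg P := by
  induction P with
  | ax Γ A C =>
    unfold inv
    split_ifs with hA hC
    · subst hA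
      cases C with
      | atom _ _ => rfl
      | or _ _ => rfl
      | and C₁ C₂ =>
        obtain ⟨h₁, h₂⟩ := Set.disjoint_union_left.1 hP.2.2.2.2.2.1
        exact (blaxg_ax_or_and h₁ h₂).symm
    · subst hC
      cases A with
      | atom _ _ => rfl
      | or _ _ => rfl
      | and A₁ A₂ =>
        obtain ⟨h₁, h₂⟩ := Set.disjoint_union_left.1 hP.2.2.2.2.2.2
        exact (blaxg_ax_and_or h₁ h₂).symm
    · have hΓ : NForm.or D E ∈ Γ := by
        simpa [concl, Ne.symm hA, Ne.symm hC] using h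
      obtain ⟨hs, hd, heq⟩ := hP.2.2.2.1.exists_eq_insert hΓ
      obtain ⟨hD, hE⟩ := Set.disjoint_union_left.1 hd
      simp only [blaxg]
      rw [BrS_insert_or hs.2.2 hD hE, ← heq]
      congr 1
      conv_rhs => rw [heq]
      simp only [snames_insert, NForm.names, Set.union_assoc]
  | cut A P Q ihP ihQ =>
    obtain ⟨hPw, hQw, Γ, hA, _, hP, hQ, _⟩ := hP
    rw [concl_cut hA hP] at h
    simp only [inv, blaxg, ihP hPw (hP ▸ Finset.mem_insert_of_mem h),
      ihQ hQw (hQ ▸ Finset.mem_insert_of_mem h)]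
  | sup P Q ihP ihQ =>
    obtain ⟨hPw, hQw, hPQ⟩ := hP
    simp only [inv, blaxg, ihP hPw h, ihQ hQw (hPQ ▸ h)]
  | orI A B P ihP =>
    unfold inv
    split_ifs with hAB
    · rfl
    · obtain ⟨hPw, _⟩ := hP
      have hne : ¬(D = A ∧ E = B) := fun h => hAB ⟨h.1.symm, h.2.symm⟩
      simp only [concl, Finset.mem_insert, NForm.or.injEq, hne, false_or] at h
      exact ihP hPw (Finset.mem_of_mem_erase (Finset.mem_of_mem_erase h))
  | andI A B P Q ihP ihQ =>
    obtain ⟨hPw, hQw, Γ, hA, _, hP, hQ, _⟩ := hP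
    rw [concl_andI hA hP] at h
    have hΓ : NForm.or D E ∈ Γ := by simpa using h
    simp only [inv, blaxg, ihP hPw (hP ▸ Finset.mem_insert_of_mem hΓ),
      ihQ hQw (hQ ▸ Finset.mem_insert_of_mem hΓ)]

theorem restrict_blaxg_union_left {P Q : Deriv α} (hPw : WF bar P) (hQw : WF bar Q)
    (hP : concl P = insert D Γ) (hQ : concl Q = insert E Γ)
    (hDE : Disjoint D.names E.names) (hE : Disjoint E.names (snames Γ)) :
    ((blaxg P).union (blaxg Q)).restrict E.namesᶜ = blaxg P := by
  refine BLGraph.ext ?_ fun e X => ⟨?_, fun h => ⟨Or.inl h, ?_⟩⟩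
  · simp only [BLGraph.restrict, BLGraph.union, blaxg_verts hPw, blaxg_verts hQw, hP, hQ,
      snames_insert]
    ext x
    have : x ∈ _ → x ∉ _ := fun hx => Set.disjoint_left.1 hDE hx
    have : x ∈ _ → x ∉ _ := fun hx => Set.disjoint_left.1 hE hx
    simp only [Set.mem_inter_iff, Set.mem_union, Set.mem_compl_iff]
    tauto
  · rintro ⟨h | h, hX⟩
    · exact h
    · exact absurd hX (not_subset_compl_of_mem_BrS (hQ ▸ Finset.mem_insert_self E Γ)
        (mem_BrS_of_blaxg_rel hQw h))
  · exact subset_compl_of_mem_BrS_insert hDE hE (hP ▸ mem_BrS_of_blaxg_rel hPw h)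

theorem restrict_blaxg_union_right {P Q : Deriv α} (hPw : WF bar P) (hQw : WF bar Q)
    (hP : concl P = insert D Γ) (hQ : concl Q = insert E Γ)
    (hDE : Disjoint D.names E.names) (hD : Disjoint D.names (snames Γ)) :
    ((blaxg P).union (blaxg Q)).restrict D.namesᶜ = blaxg Q := by
  rw [BLGraph.union_comm]
  exact restrict_blaxg_union_left hQw hPw hQ hP hDE.symm hD

/-- Replacing a conjunction of an axiom context by one conjunct `F` restricts the graph to the
labels avoiding the names of the other conjunct `N`. -/
theorem restrict_blaxg_ax {Δ : Finset (NForm α)} {F N : NForm α}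
    (hAN : Disjoint A.names N.names) (hCN : Disjoint C.names N.names)
    (hshape : A.shape = (negF bar C).shape) (hFN : Disjoint F.names N.names)
    (hN : Disjoint N.names (snames Δ))
    (hnames : snames Γ = (F.names ∪ N.names) ∪ snames Δ)
    (hbr : ∀ X, X ∈ BrS Γ ↔ X ∈ BrS (insert F Δ) ∨ X ∈ BrS (insert N Δ)) :
    blaxg (.ax (insert F Δ) A C) = (blaxg (.ax Γ A C)).restrict N.namesᶜ := by
  refine BLGraph.ext ?_ fun e X => ⟨?_, ?_⟩
  · simp only [blaxg, blwk, BLGraph.restrict, blid_verts hshape, snames_insert, hnames]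
    ext x
    have : x ∈ _ → x ∉ _ := fun hx => Set.disjoint_left.1 hAN hx
    have : x ∈ _ → x ∉ _ := fun hx => Set.disjoint_left.1 hCN hx
    have : x ∈ _ → x ∉ _ := fun hx => Set.disjoint_left.1 hFN hx
    have : x ∈ _ → x ∉ _ := fun hx => Set.disjoint_left.1 hN hx
    simp only [Set.mem_inter_iff, Set.mem_union, Set.mem_compl_iff]
    tauto
  · rintro ⟨Y, Z, hY, hZ, rfl⟩
    refine ⟨⟨Y, Z, hY, (hbr Z).2 (Or.inl hZ), rfl⟩, Set.union_subset ?_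
      (subset_compl_of_mem_BrS_insert hFN hN hZ)⟩
    obtain ⟨U, hU, V, hV, rfl⟩ := exists_BrF_of_blid_rel hY
    exact Set.union_subset
      (Set.subset_compl_iff_disjoint_right.2 (hAN.mono_left (subset_names_of_mem_BrF hU)))
      (Set.subset_compl_iff_disjoint_right.2 (hCN.mono_left (subset_names_of_mem_BrF hV)))
  · rintro ⟨⟨Y, Z, hY, hZ, rfl⟩, hX⟩
    refine ⟨Y, Z, hY, ((hbr Z).1 hZ).resolve_right fun hZ' => ?_, rfl⟩
    exact not_subset_compl_of_mem_BrS (Finset.mem_insert_self N Δ) hZ'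
      (Set.subset_union_right.trans hX)

theorem blaxg_invl {P : Deriv α} (hP : WF bar P) (h : NForm.and D E ∈ concl P) :
    blaxg (invl D E P) = (blaxg P).restrict E.namesᶜ := by
  induction P with
  | ax Γ A C =>
    unfold invl
    split_ifs with hA hC
    · subst hA
      cases C with
      | atom _ _ => simp [WF, NForm.shape, negF] at hP
      | and _ _ => simp [WF, NForm.shape, negF] at hP
      | or C₁ C₂ =>
        obtain ⟨h₁, h₂⟩ := hP.ax_and_or
        obtain ⟨_, hDE, _, _, hDC, hDΓ, hCΓ⟩ := hP
        simp only [NForm.sharingFree, NForm.names, Set.disjoint_union_left,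
          Set.disjoint_union_right] at hDE hDC hDΓ hCΓ
        rw [blaxg_ax_and_or hCΓ.1 hCΓ.2]
        refine (restrict_blaxg_union_left (Γ := insert C₁ (insert C₂ Γ)) h₁ h₂ rfl ?_
          hDE.2.2 ?_).symm
        · rw [concl, Finset.insert_comm C₂ C₁]
        · simp only [snames_insert, Set.disjoint_union_right]
          exact ⟨hDC.1.2, hDC.2.2, hDΓ.2⟩
    · subst hC
      cases A with
      | atom _ _ => simp [WF, NForm.shape, negF] at hP
      | and _ _ => simp [WF, NForm.shape, negF] at hP
      | or A₁ A₂ =>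
        obtain ⟨h₁, h₂⟩ := hP.ax_or_and
        obtain ⟨_, _, hDE, _, hAD, hAΓ, hDΓ⟩ := hP
        simp only [NForm.sharingFree, NForm.names, Set.disjoint_union_left,
          Set.disjoint_union_right] at hDE hAD hAΓ hDΓ
        rw [blaxg_ax_or_and hAΓ.1 hAΓ.2]
        refine (restrict_blaxg_union_left (Γ := insert A₁ (insert A₂ Γ)) h₁ h₂ ?_ ?_
          hDE.2.2 ?_).symm
        · rw [concl, Finset.insert_comm]
        · rw [concl, Finset.insert_comm, Finset.insert_comm A₂ A₁]
        · simp only [snames_insert, Set.disjoint_union_right]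
          exact ⟨hAD.2.1.symm, hAD.2.2.symm, hDΓ.2⟩
    · have hΓ : NForm.and D E ∈ Γ := by
        simpa [concl, Ne.symm hA, Ne.symm hC] using h
      obtain ⟨hshape, _, _, hsf, _, hAΓ, hCΓ⟩ := hP
      obtain ⟨hs, hd, heq⟩ := hsf.exists_eq_insert hΓ
      obtain ⟨hD, hE⟩ := Set.disjoint_union_left.1 hd
      have hsub : E.names ⊆ snames Γ :=
        (Set.subset_union_right (s := D.names)).trans (names_subset_snames hΓ)
      refine restrict_blaxg_ax (hAΓ.mono_right hsub) (hCΓ.mono_right hsub) hshape hs.2.2 hE ?_ ?_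
      · conv_lhs => rw [heq]
        exact snames_insert _ _
      · intro X
        conv_lhs => rw [heq]
        exact mem_BrS_insert_and hD hE
  | cut A P Q ihP ihQ =>
    obtain ⟨hPw, hQw, Γ, hA, _, hP, hQ, _, _, hAΓ⟩ := hP
    rw [concl_cut hA hP] at h
    simp only [invl, blaxg, ihP hPw (hP ▸ Finset.mem_insert_of_mem h),
      ihQ hQw (hQ ▸ Finset.mem_insert_of_mem h)]
    exact (BLGraph.restrict_comp (hAΓ.mono_right ((Set.subset_union_right (s := D.names)).trans
      (names_subset_snames h))) _ _).symm
  | sup P Q ihP ihQ =>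
    obtain ⟨hPw, hQw, hPQ⟩ := hP
    simp only [invl, blaxg, ihP hPw h, ihQ hQw (hPQ ▸ h), BLGraph.restrict_union]
  | orI A B P ihP =>
    simp only [concl, Finset.mem_insert, reduceCtorEq, false_or] at h
    exact ihP hP.1 (Finset.mem_of_mem_erase (Finset.mem_of_mem_erase h))
  | andI A B P Q ihP ihQ =>
    obtain ⟨hPw, hQw, Γ, hA, _, hP, hQ, _, _, _, hAB, hAΓ, hBΓ⟩ := hP
    unfold invl
    split_ifs with hDE
    · obtain ⟨rfl, rfl⟩ := hDE
      exact (restrict_blaxg_union_left hPw hQw hP hQ hAB hBΓ).symm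
    · have hne : ¬(D = A ∧ E = B) := fun h => hDE ⟨h.1.symm, h.2.symm⟩
      rw [concl_andI hA hP] at h
      simp only [Finset.mem_insert, NForm.and.injEq, hne, false_or] at h
      simp only [blaxg, ihP hPw (hP ▸ Finset.mem_insert_of_mem h),
        ihQ hQw (hQ ▸ Finset.mem_insert_of_mem h), BLGraph.restrict_union]

theorem blaxg_invr {P : Deriv α} (hP : WF bar P) (h : NForm.and D E ∈ concl P) :
    blaxg (invr D E P) = (blaxg P).restrict D.namesᶜ := by
  induction P with
  | ax Γ A C =>
    unfold invr
    split_ifs with hA hC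
    · subst hA
      cases C with
      | atom _ _ => simp [WF, NForm.shape, negF] at hP
      | and _ _ => simp [WF, NForm.shape, negF] at hP
      | or C₁ C₂ =>
        obtain ⟨h₁, h₂⟩ := hP.ax_and_or
        obtain ⟨_, hDE, _, _, hDC, hDΓ, hCΓ⟩ := hP
        simp only [NForm.sharingFree, NForm.names, Set.disjoint_union_left,
          Set.disjoint_union_right] at hDE hDC hDΓ hCΓ
        rw [blaxg_ax_and_or hCΓ.1 hCΓ.2]
        refine (restrict_blaxg_union_right (Γ := insert C₁ (insert C₂ Γ)) h₁ h₂ rfl ?_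
          hDE.2.2 ?_).symm
        · rw [concl, Finset.insert_comm C₂ C₁]
        · simp only [snames_insert, Set.disjoint_union_right]
          exact ⟨hDC.1.1, hDC.2.1, hDΓ.1⟩
    · subst hC
      cases A with
      | atom _ _ => simp [WF, NForm.shape, negF] at hP
      | and _ _ => simp [WF, NForm.shape, negF] at hP
      | or A₁ A₂ =>
        obtain ⟨h₁, h₂⟩ := hP.ax_or_and
        obtain ⟨_, _, hDE, _, hAD, hAΓ, hDΓ⟩ := hP
        simp only [NForm.sharingFree, NForm.names, Set.disjoint_union_left,
          Set.disjoint_union_right] at hDE hAD hAΓ hDΓ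
        rw [blaxg_ax_or_and hAΓ.1 hAΓ.2]
        refine (restrict_blaxg_union_right (Γ := insert A₁ (insert A₂ Γ)) h₁ h₂ ?_ ?_
          hDE.2.2 ?_).symm
        · rw [concl, Finset.insert_comm]
        · rw [concl, Finset.insert_comm, Finset.insert_comm A₂ A₁]
        · simp only [snames_insert, Set.disjoint_union_right]
          exact ⟨hAD.1.1.symm, hAD.1.2.symm, hDΓ.1⟩
    · have hΓ : NForm.and D E ∈ Γ := by
        simpa [concl, Ne.symm hA, Ne.symm hC] using h
      obtain ⟨hshape, _, _, hsf, _, hAΓ, hCΓ⟩ := hP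
      obtain ⟨hs, hd, heq⟩ := hsf.exists_eq_insert hΓ
      obtain ⟨hD, hE⟩ := Set.disjoint_union_left.1 hd
      have hsub : D.names ⊆ snames Γ :=
        (Set.subset_union_left (t := E.names)).trans (names_subset_snames hΓ)
      refine restrict_blaxg_ax (hAΓ.mono_right hsub) (hCΓ.mono_right hsub) hshape hs.2.2.symm hD
        ?_ ?_
      · conv_lhs => rw [heq]
        rw [Set.union_comm E.names]
        exact snames_insert _ _
      · intro X
        conv_lhs => rw [heq]
        exact (mem_BrS_insert_and hD hE).trans or_comm
  | cut A P Q ihP ihQ =>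
    obtain ⟨hPw, hQw, Γ, hA, _, hP, hQ, _, _, hAΓ⟩ := hP
    rw [concl_cut hA hP] at h
    simp only [invr, blaxg, ihP hPw (hP ▸ Finset.mem_insert_of_mem h),
      ihQ hQw (hQ ▸ Finset.mem_insert_of_mem h)]
    exact (BLGraph.restrict_comp (hAΓ.mono_right ((Set.subset_union_left (t := E.names)).trans
      (names_subset_snames h))) _ _).symm
  | sup P Q ihP ihQ =>
    obtain ⟨hPw, hQw, hPQ⟩ := hP
    simp only [invr, blaxg, ihP hPw h, ihQ hQw (hPQ ▸ h), BLGraph.restrict_union]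
  | orI A B P ihP =>
    simp only [concl, Finset.mem_insert, reduceCtorEq, false_or] at h
    exact ihP hP.1 (Finset.mem_of_mem_erase (Finset.mem_of_mem_erase h))
  | andI A B P Q ihP ihQ =>
    obtain ⟨hPw, hQw, Γ, hA, _, hP, hQ, _, _, _, hAB, hAΓ, hBΓ⟩ := hP
    unfold invr
    split_ifs with hDE
    · obtain ⟨rfl, rfl⟩ := hDE
      exact (restrict_blaxg_union_right hPw hQw hP hQ hAB hAΓ).symm
    · have hne : ¬(D = A ∧ E = B) := fun h => hDE ⟨h.1.symm, h.2.symm⟩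
      rw [concl_andI hA hP] at h
      simp only [Finset.mem_insert, NForm.and.injEq, hne, false_or] at h
      simp only [blaxg, ihP hPw (hP ▸ Finset.mem_insert_of_mem h),
        ihQ hQw (hQ ▸ Finset.mem_insert_of_mem h), BLGraph.restrict_union]

theorem restrict_blaxg_union_restrict {P : Deriv α} (hP : WF bar P)
    (h : NForm.and D E ∈ concl P) :
    ((blaxg P).restrict E.namesᶜ).union ((blaxg P).restrict D.namesᶜ) = blaxg P := by
  obtain ⟨hs, hd, heq⟩ := hP.sfSet_concl.exists_eq_insert h
  obtain ⟨hD, hE⟩ := Set.disjoint_union_left.1 hd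
  refine BLGraph.ext ?_ fun e X => ⟨fun h => h.elim And.left And.left, fun hX => ?_⟩
  · simp only [BLGraph.union, BLGraph.restrict, ← Set.inter_union_distrib_left,
      ← Set.compl_inter, hs.2.2.symm.inter_eq, Set.compl_empty, Set.inter_univ]
  · have hbr := mem_BrS_of_blaxg_rel hP hX
    rw [heq, mem_BrS_insert_and hD hE] at hbr
    exact hbr.imp (fun h => ⟨hX, subset_compl_of_mem_BrS_insert hs.2.2 hE h⟩)
      (fun h => ⟨hX, subset_compl_of_mem_BrS_insert hs.2.2.symm hD h⟩)

end GS4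

/-- the branch-labeled axiom graph is invariant under isolation
of a non-atomic formula in the conclusion. -/
theorem GS4.blaxg_isl {α : Type} (bar : α → α)
    (hbar : Function.Involutive bar) (hfix : ∀ a, bar a ≠ a)
    (P : GS4.Deriv α) (hP : GS4.WF bar P)
    (A : GS4.NForm α) (hA : A ∈ GS4.concl P) (hnonatom : ¬ A.isAtom) :
    GS4.blaxg (GS4.isl A P) = GS4.blaxg P := by
  cases A with
  | atom _ _ => exact absurd trivial hnonatom
  | or D E => exact blaxg_inv hP hA
  | and D E =>
    simp only [isl, blaxg, blaxg_invl hP hA, blaxg_invr hP hA]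
    exact restrict_blaxg_union_restrict hP hA
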